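/- arXiv:2202.11078 — 3 statements merged into one kernel-verified Lean document; each statement's English description precedes it below -/
import Mathlib

section
/- Let a : ℝ × ℝ^d → ℝ^d be continuous with ‖a(t,z) − a(t,z')‖ ≤ L ‖z − z'‖ for all t ∈ [0,T] and z, z' ∈ ℝ^d, and let Φ : [0,T] × ℝ^d → ℝ^d satisfy Φ_0(z) = z and ∂_t Φ_t(z) = a(t, Φ_t(z)) for all z and t ∈ [0,T]. Let Q ⊆ ℝ^d be nonempty and Z ⊆ Q be nonempty with fill distance h := sup_{z ∈ Q} inf_{s ∈ Z} ‖z − s‖. Then for every t ∈ [0,T] the fill distance of the transported particle set Φ_t(Z) in the transported domain Φ_t(Q) satisfies sup_{y ∈ Φ_t(Q)} inf_{s ∈ Φ_t(Z)} ‖y − s‖ ≤ e^{L t} · h. -/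
open Set
open scoped ENNReal

/-- **fill distance of the transported particle set.** Let `a` be a
continuous velocity field on `ℝ^d`, `L`-Lipschitz in the spatial variable for
`t ∈ [0,T]`, and let `Φ` be its flow map (`Φ 0 z = z`, `∂ₜ Φ t z = a (t, Φ t z)`).
For a nonempty particle set `Z` inside a nonempty domain `Q` with fill distance
`h = sup_{z ∈ Q} inf_{s ∈ Z} ‖z − s‖`, the fill distance of the transported particle
set `Φ t '' Z` in the transported domain `Φ t '' Q` is at most `exp (L t) ⬝ h`,
for every `t ∈ [0,T]`.  (Distances are measured by `edist y s = ‖y − s‖`.) -/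
theorem fill_distance_transported_particles
    {d : ℕ} (T : ℝ)
    (a : ℝ × EuclideanSpace ℝ (Fin d) → EuclideanSpace ℝ (Fin d))
    (ha : Continuous a)
    (L : ℝ) (hL : 0 ≤ L)
    (hlip : ∀ t ∈ Icc (0 : ℝ) T, ∀ z z' : EuclideanSpace ℝ (Fin d),
      ‖a (t, z) - a (t, z')‖ ≤ L * ‖z - z'‖)
    (Φ : ℝ → EuclideanSpace ℝ (Fin d) → EuclideanSpace ℝ (Fin d))
    (hΦ0 : ∀ z, Φ 0 z = z)
    (hΦode : ∀ (z : EuclideanSpace ℝ (Fin d)), ∀ t ∈ Icc (0 : ℝ) T,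
      HasDerivAt (fun s => Φ s z) (a (t, Φ t z)) t)
    (Q Z : Set (EuclideanSpace ℝ (Fin d)))
    (hQ : Q.Nonempty) (hZ : Z.Nonempty) (hZQ : Z ⊆ Q) :
    ∀ t ∈ Icc (0 : ℝ) T,
      (⨆ y ∈ Φ t '' Q, ⨅ s ∈ Φ t '' Z, edist y s) ≤
        ENNReal.ofReal (Real.exp (L * t)) * ⨆ z ∈ Q, ⨅ s ∈ Z, edist z s := by
  intro t ht
  have key : ∀ z s, edist (Φ t z) (Φ t s) ≤ ENNReal.ofReal (Real.exp (L * t)) * edist z s := by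
    intro z s
    have h := dist_le_of_trajectories_ODE_of_mem (v := fun t z => a (t, z)) (s := fun _ => univ)
      (K := ⟨L, hL⟩) (f := fun r => Φ r z) (g := fun r => Φ r s) (a := 0) (b := T)
      (δ := dist z s)
      (fun r hr => LipschitzOnWith.of_dist_le_mul (fun x _ y _ => by
        rw [dist_eq_norm, dist_eq_norm]
        exact hlip r (Ico_subset_Icc_self hr) x y))
      (fun r hr => (hΦode z r hr).continuousAt.continuousWithinAt)
      (fun r hr => (hΦode z r (Ico_subset_Icc_self hr)).hasDerivWithinAt)
      (fun _ _ => mem_univ _)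
      (fun r hr => (hΦode s r hr).continuousAt.continuousWithinAt)
      (fun r hr => (hΦode s r (Ico_subset_Icc_self hr)).hasDerivWithinAt)
      (fun _ _ => mem_univ _)
      (by simp [hΦ0]) t ht
    have h' : dist (Φ t z) (Φ t s) ≤ Real.exp (L * t) * dist z s := by
      rw [mul_comm]
      rw [sub_zero] at h
      exact h
    rw [edist_dist, edist_dist, ← ENNReal.ofReal_mul (Real.exp_pos _).le]
    exact ENNReal.ofReal_le_ofReal h'
  have hc0 : ENNReal.ofReal (Real.exp (L * t)) ≠ 0 := by
    simp [Real.exp_pos]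
  refine iSup₂_le ?_
  rintro _ ⟨z, hz, rfl⟩
  refine le_trans ?_ (mul_le_mul_right (le_iSup₂ (f := fun z (_ : z ∈ Q) => ⨅ s ∈ Z, edist z s) z hz) _)
  simp only [ENNReal.mul_iInf_of_ne hc0 ENNReal.ofReal_ne_top]
  exact le_iInf₂ fun s hs => (iInf₂_le (Φ t s) (mem_image_of_mem _ hs)).trans (key z s)
end

section
/- Let X and Y be sets and let k₁ : X × X → ℝ and k₂ : Y × Y → ℝ be symmetric kernels that are strictly positive definite, i.e., for every N, every family of pairwise distinct points and every nonzero c ∈ ℝ^N the corresponding kernel matrix (k₁(x_i, x_j))_{ij} (respectively (k₂(v_i, v_j))_{ij}) has Σ_{i,j} c_i c_j k(·_i, ·_j) > 0. Define the tensorised kernel k : (X × Y) × (X × Y) → ℝ by k((x,v), (x̃,ṽ)) := k₁(x, x̃) · k₂(v, ṽ). Then k is strictly positive definite on X × Y: for every N, all pairwise distinct pairs (x₁,v₁), …, (x_N,v_N) ∈ X × Y, and every nonzero c ∈ ℝ^N, one has Σ_{i,j} c_i c_j k₁(x_i, x_j) k₂(v_i, v_j) > 0. -/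
open Finset

theorem posDef_of_kernel_aux {X ι : Type*} [Fintype ι] (k : X → X → ℝ)
    (hs : ∀ x x', k x x' = k x' x)
    (hk : ∀ (N : ℕ) (x : Fin N → X), Function.Injective x →
      ∀ c : Fin N → ℝ, c ≠ 0 → 0 < ∑ i, ∑ j, c i * c j * k (x i) (x j))
    (f : ι → X) (hf : Function.Injective f) :
    (Matrix.of fun i j => k (f i) (f j)).PosDef := by
  have key : (Matrix.of fun i j : Fin (Fintype.card ι) =>
      k (f ((Fintype.equivFin ι).symm i)) (f ((Fintype.equivFin ι).symm j))).PosDef := by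
    refine Matrix.PosDef.of_dotProduct_mulVec_pos ?_ ?_
    · ext i j
      simpa using hs _ _
    · intro c hc
      have := hk _ (fun i => f ((Fintype.equivFin ι).symm i))
        (hf.comp (Fintype.equivFin ι).symm.injective) c hc
      refine this.trans_eq ?_
      simp only [dotProduct, Matrix.mulVec, Finset.mul_sum, Matrix.of_apply, Pi.star_apply,
        star_trivial]
      exact Finset.sum_congr rfl fun i _ => Finset.sum_congr rfl fun j _ => by ring
  have := key.submatrix (Fintype.equivFin ι).injective
  convert this using 1
  ext i j
  simp

/-- **tensorised kernels are strictly positive definite.** If `k₁` and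
`k₂` are symmetric, strictly positive definite kernels on `X` and `Y` respectively,
then the tensorised kernel `k ((x,v), (x̃,ṽ)) = k₁ x x̃ * k₂ v ṽ` is strictly positive
definite on `X × Y`: for all pairwise distinct pairs `(x i, v i)` and every nonzero
`c`, one has `∑ i ∑ j, c i * c j * k₁ (x i) (x j) * k₂ (v i) (v j) > 0`. -/
theorem tensorised_kernel_strictly_posdef
    {X Y : Type*} (k₁ : X → X → ℝ) (k₂ : Y → Y → ℝ)
    (hk₁symm : ∀ x x', k₁ x x' = k₁ x' x)
    (hk₂symm : ∀ v v', k₂ v v' = k₂ v' v)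
    (hk₁ : ∀ (N : ℕ) (x : Fin N → X), Function.Injective x →
      ∀ c : Fin N → ℝ, c ≠ 0 → 0 < ∑ i, ∑ j, c i * c j * k₁ (x i) (x j))
    (hk₂ : ∀ (N : ℕ) (v : Fin N → Y), Function.Injective v →
      ∀ c : Fin N → ℝ, c ≠ 0 → 0 < ∑ i, ∑ j, c i * c j * k₂ (v i) (v j)) :
    ∀ (N : ℕ) (p : Fin N → X × Y), Function.Injective p →
      ∀ c : Fin N → ℝ, c ≠ 0 →
        0 < ∑ i, ∑ j, c i * c j * k₁ (p i).1 (p j).1 * k₂ (p i).2 (p j).2 := by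
  classical
  intro N p hp c hc
  have h1 := posDef_of_kernel_aux k₁ hk₁symm hk₁
    (fun a : Set.range (fun i => (p i).1) => (a : X)) Subtype.val_injective
  have h2 := posDef_of_kernel_aux k₂ hk₂symm hk₂
    (fun a : Set.range (fun i => (p i).2) => (a : Y)) Subtype.val_injective
  have h3 := (h1.kronecker h2).submatrix
    (e := fun i : Fin N => (⟨⟨(p i).1, i, rfl⟩, ⟨(p i).2, i, rfl⟩⟩ :
      Set.range (fun i => (p i).1) × Set.range (fun i => (p i).2))) (by
      intro i j hij
      simp only [Prod.mk.injEq] at hij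
      exact hp (Prod.ext (congrArg Subtype.val hij.1) (congrArg Subtype.val hij.2)))
  have h4 := h3.dotProduct_mulVec_pos hc
  refine h4.trans_eq ?_
  simp only [dotProduct, Matrix.mulVec, Finset.mul_sum, Matrix.submatrix_apply,
    Matrix.kroneckerMap_apply, Matrix.of_apply, Pi.star_apply, star_trivial]
  exact Finset.sum_congr rfl fun i _ => Finset.sum_congr rfl fun j _ => by ring
end

section
/- Define b : ℝ → ℝ by b(r) = (max(1 − |r|, 0))⁴ · (4|r| + 1) (the Wendland function φ_{3,1}). Then b is strictly positive definite as a kernel on ℝ: for every N, every family of pairwise distinct points x₁, …, x_N ∈ ℝ, and every nonzero c ∈ ℝ^N, Σ_{i,j} c_i c_j b(x_i − x_j) > 0; in particular the kernel matrix (b(x_i − x_j))_{ij} is symmetric positive definite. -/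
open Finset

/-- The Wendland function `φ_{3,1}(r) = (1 − |r|)₊⁴ (4|r| + 1)`. -/
noncomputable def wendland31 (r : ℝ) : ℝ := (max (1 - |r|) 0) ^ 4 * (4 * |r| + 1)

/-- Parabola bump supported on `[0,s]`. -/
noncomputable def wbump (s v : ℝ) : ℝ := max (v * (s - v)) 0

/-- The kernel of the mixture: scaled autocorrelation of the bump. -/
noncomputable def wker (s r : ℝ) : ℝ :=
  4 * (max s |r|) ^ 3 - 20 * |r| ^ 2 * (max s |r|) + 20 * |r| ^ 3
    - 4 * |r| ^ 5 / (max s |r|) ^ 2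

lemma wker_zero_of_le {s r : ℝ} (h : s ≤ |r|) : wker s r = 0 := by
  unfold wker
  rw [max_eq_right h]
  rcases eq_or_ne |r| 0 with h0 | h0
  · rw [h0]; norm_num
  · field_simp; ring

lemma wker_continuous (r : ℝ) : Continuous (fun s => wker s r) := by
  unfold wker
  rcases eq_or_ne r 0 with h0 | h0
  · subst h0
    simp only [abs_zero]
    norm_num
    fun_prop
  · have hp : 0 < |r| := abs_pos.mpr h0
    have : ∀ s : ℝ, (max s |r|) ^ 2 ≠ 0 := fun s => by
      have : 0 < max s |r| := lt_of_lt_of_le hp (le_max_right _ _)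
      positivity
    fun_prop (disch := exact this _)

lemma wendland_eq (r : ℝ) : wendland31 r = ∫ s in (0:ℝ)..1, wker s r := by
  have hr := abs_nonneg r
  have hi : ∀ a b : ℝ, IntervalIntegrable (fun s => wker s r) MeasureTheory.volume a b :=
    fun a b => (wker_continuous r).intervalIntegrable a b
  rcases le_total 1 |r| with h | h
  · have : ∫ s in (0:ℝ)..1, wker s r = ∫ s in (0:ℝ)..1, (0:ℝ) := by
      apply intervalIntegral.integral_congr
      intro s hs
      rw [Set.uIcc_of_le zero_le_one] at hs
      exact wker_zero_of_le (hs.2.trans h)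
    rw [this, wendland31, max_eq_right (by linarith)]
    simp
  · have h1 : ∫ s in (0:ℝ)..|r|, wker s r = ∫ s in (0:ℝ)..|r|, (0:ℝ) := by
      apply intervalIntegral.integral_congr
      intro s hs
      rw [Set.uIcc_of_le hr] at hs
      exact wker_zero_of_le hs.2
    rw [← intervalIntegral.integral_add_adjacent_intervals (hi 0 |r|) (hi |r| 1), h1]
    rw [wendland31, max_eq_left (by linarith)]
    rcases eq_or_ne r 0 with h0 | h0
    · subst h0
      have h2 : ∫ s in (|0|:ℝ)..1, wker s 0 = 1 := by
        have : ∫ s in (|0|:ℝ)..1, wker s 0 = ∫ s in (|0|:ℝ)..1, 4 * s ^ 3 := by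
          apply intervalIntegral.integral_congr
          intro s hs
          rw [Set.uIcc_of_le h] at hs
          simp only [wker]
          rw [max_eq_left hs.1]
          simp
        rw [this]
        simp
        norm_num
      rw [h2]; simp
    · have hp : 0 < |r| := abs_pos.mpr h0
      have h2 : ∫ s in |r|..1, wker s r
          = (1 ^ 4 - 10 * |r| ^ 2 * 1 ^ 2 + 20 * |r| ^ 3 * 1 + 4 * |r| ^ 5 * (1:ℝ)⁻¹)
          - (|r| ^ 4 - 10 * |r| ^ 2 * |r| ^ 2 + 20 * |r| ^ 3 * |r| + 4 * |r| ^ 5 * |r|⁻¹) := by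
        apply intervalIntegral.integral_eq_sub_of_hasDerivAt
          (f := fun s => s ^ 4 - 10 * |r| ^ 2 * s ^ 2 + 20 * |r| ^ 3 * s + 4 * |r| ^ 5 * s⁻¹)
        · intro s hs
          rw [Set.uIcc_of_le h] at hs
          have hs0 : 0 < s := hp.trans_le hs.1
          have := ((((hasDerivAt_pow 4 s).sub ((hasDerivAt_pow 2 s).const_mul (10 * |r| ^ 2))).add
            ((hasDerivAt_id s).const_mul (20 * |r| ^ 3))).add
            ((hasDerivAt_inv hs0.ne').const_mul (4 * |r| ^ 5)))
          refine HasDerivAt.congr_deriv this ?_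
          symm
          simp only [wker]
          rw [max_eq_left hs.1]
          field_simp
          ring
        · exact hi _ _
      rw [h2]
      simp only [intervalIntegral.integral_zero]
      field_simp
      ring

lemma wbump_continuous (s : ℝ) : Continuous (wbump s) := by
  unfold wbump; fun_prop

lemma wbump_out {s v : ℝ} (hs : 0 ≤ s) (h : v ≤ 0 ∨ s ≤ v) : wbump s v = 0 := by
  unfold wbump
  apply max_eq_right
  rcases h with h | h <;> nlinarith

lemma wbump_in {s v : ℝ} (h : 0 ≤ v) (h' : v ≤ s) : wbump s v = v * (s - v) := by
  unfold wbump
  apply max_eq_left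
  exact mul_nonneg h (by linarith)

lemma wint_cont (s x y : ℝ) : Continuous (fun u => wbump s (u - x) * wbump s (u - y)) := by
  have := wbump_continuous s
  fun_prop

lemma wker_autocorr_le {s x y A B : ℝ} (hs : 0 < s) (hxy : x ≤ y) (hA : A ≤ x) (hB : y + s ≤ B) :
    s ^ 2 * wker s (x - y) = 120 * ∫ u in A..B, wbump s (u - x) * wbump s (u - y) := by
  have habs : |x - y| = y - x := by rw [abs_sub_comm]; exact abs_of_nonneg (by linarith)
  have hi : ∀ a b : ℝ, IntervalIntegrable (fun u => wbump s (u - x) * wbump s (u - y))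
    MeasureTheory.volume a b := fun a b => (wint_cont s x y).intervalIntegrable a b
  have hz : ∀ u, (u ≤ y ∨ x + s ≤ u) → wbump s (u - x) * wbump s (u - y) = 0 := by
    rintro u (h | h)
    · rw [wbump_out (v := u - y) hs.le (Or.inl (by linarith))]; simp
    · rw [wbump_out (v := u - x) hs.le (Or.inr (by linarith))]; simp
  have hI : ∀ a b : ℝ, a ≤ b → (∀ u, a ≤ u → u ≤ b → (u ≤ y ∨ x + s ≤ u)) →
      ∫ u in a..b, wbump s (u - x) * wbump s (u - y) = 0 := by
    intro a b hab h
    have : ∫ u in a..b, wbump s (u - x) * wbump s (u - y) = ∫ u in a..b, (0:ℝ) := by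
      apply intervalIntegral.integral_congr
      intro u hu
      rw [Set.uIcc_of_le hab] at hu
      exact hz u (h u hu.1 hu.2)
    rw [this]; simp
  rcases le_total (x + s) y with h | h
  · rw [wker_zero_of_le (by rw [habs]; linarith), hI A B (by linarith)]
    · simp
    · intro u _ _
      rcases le_total u y with h' | h'
      · exact Or.inl h'
      · exact Or.inr (h.trans h')
  · rw [← intervalIntegral.integral_add_adjacent_intervals (hi A y) (hi y B),
      ← intervalIntegral.integral_add_adjacent_intervals (hi y (x + s)) (hi (x + s) B),
      hI A y (by linarith) (fun u _ h => Or.inl h),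
      hI (x + s) B (by linarith) (fun u h _ => Or.inr h)]
    let G : ℝ → ℝ := fun u =>
      (s - (y - x)) * s * (y - x) / 2 * (u - y) ^ 2
        + ((s - (y - x)) ^ 2 - s * (y - x)) / 3 * (u - y) ^ 3
        - (s - (y - x)) / 2 * (u - y) ^ 4 + 1 / 5 * (u - y) ^ 5
    have h2 : ∫ u in y..(x + s), wbump s (u - x) * wbump s (u - y) = G (x + s) - G y := by
      apply intervalIntegral.integral_eq_sub_of_hasDerivAt
      · intro u hu
        rw [Set.uIcc_of_le h] at hu
        have hd := (hasDerivAt_id u).sub_const y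
        have := (((((hd.pow 2).const_mul ((s - (y - x)) * s * (y - x) / 2)).add
          ((hd.pow 3).const_mul (((s - (y - x)) ^ 2 - s * (y - x)) / 3))).sub
          ((hd.pow 4).const_mul ((s - (y - x)) / 2))).add
          ((hd.pow 5).const_mul (1 / 5)))
        have this' : HasDerivAt G _ u := this
        refine this'.congr_deriv ?_
        symm
        rw [wbump_in (by linarith [hu.1]) (by linarith [hu.2]),
          wbump_in (by linarith [hu.1]) (by linarith [hu.2])]
        simp
        ring
      · exact hi _ _
    rw [h2]
    simp only [wker, G, habs]
    rw [max_eq_left (by linarith)]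
    field_simp
    ring

lemma wker_autocorr {s x y A B : ℝ} (hs : 0 < s) (hAx : A ≤ x) (hAy : A ≤ y)
    (hBx : x + s ≤ B) (hBy : y + s ≤ B) :
    s ^ 2 * wker s (x - y) = 120 * ∫ u in A..B, wbump s (u - x) * wbump s (u - y) := by
  rcases le_total x y with h | h
  · exact wker_autocorr_le hs h hAx hBy
  · have h1 : wker s (x - y) = wker s (y - x) := by unfold wker; rw [abs_sub_comm]
    rw [h1, wker_autocorr_le hs h hAy hBx]
    simp only [mul_comm]

lemma wker_form_nonneg {N : ℕ} (x c : Fin N → ℝ) {s : ℝ} (hs : 0 < s) :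
    0 ≤ ∑ i, ∑ j, c i * c j * wker s (x i - x j) := by
  set M : ℝ := ∑ i, |x i| with hM
  have hle : ∀ i, |x i| ≤ M := fun i =>
    Finset.single_le_sum (f := fun i => |x i|) (fun _ _ => abs_nonneg _) (Finset.mem_univ i)
  have hM0 : 0 ≤ M := Finset.sum_nonneg fun _ _ => abs_nonneg _
  have hl : ∀ i, -M ≤ x i := fun i => (abs_le.mp (hle i)).1
  have hu : ∀ i, x i + s ≤ M + s := fun i => by linarith [(abs_le.mp (hle i)).2]
  have key : s ^ 2 * ∑ i, ∑ j, c i * c j * wker s (x i - x j)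
      = 120 * ∫ u in (-M)..(M + s), (∑ i, c i * wbump s (u - x i)) ^ 2 := by
    have e : ∀ u, (∑ i, c i * wbump s (u - x i)) ^ 2
        = ∑ i, ∑ j, c i * c j * (wbump s (u - x i) * wbump s (u - x j)) := by
      intro u
      rw [sq, Finset.sum_mul_sum]
      refine Finset.sum_congr rfl fun i _ => Finset.sum_congr rfl fun j _ => by ring
    simp only [e]
    rw [intervalIntegral.integral_finsetSum]
    · rw [Finset.mul_sum, Finset.mul_sum]
      refine Finset.sum_congr rfl fun i _ => ?_
      rw [intervalIntegral.integral_finsetSum]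
      · rw [Finset.mul_sum, Finset.mul_sum]
        refine Finset.sum_congr rfl fun j _ => ?_
        rw [intervalIntegral.integral_const_mul]
        linear_combination c i * c j * wker_autocorr hs (hl i) (hl j) (hu i) (hu j)
      · intro j _
        exact ((wint_cont s (x i) (x j)).const_mul _).intervalIntegrable _ _
    · intro i _
      exact (continuous_finsetSum _ fun j _ =>
        (wint_cont s (x i) (x j)).const_mul _).intervalIntegrable _ _
  have hnn : 0 ≤ ∫ u in (-M)..(M + s), (∑ i, c i * wbump s (u - x i)) ^ 2 :=
    intervalIntegral.integral_nonneg (by linarith) fun u _ => sq_nonneg _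
  have hs2 : 0 < s ^ 2 := by positivity
  by_contra hneg
  push Not at hneg
  nlinarith [mul_neg_of_pos_of_neg hs2 hneg]

lemma exists_sep {N : ℕ} (x : Fin N → ℝ) (hx : Function.Injective x) :
    ∃ s : ℝ, 0 < s ∧ s ≤ 1 ∧ ∀ i j, i ≠ j → s ≤ |x i - x j| := by
  let S : Finset ℝ := insert 1
    (((Finset.univ : Finset (Fin N × Fin N)).filter (fun p => p.1 ≠ p.2)).image
      (fun p => |x p.1 - x p.2|))
  have hS : S.Nonempty := Finset.insert_nonempty _ _
  refine ⟨S.min' hS, ?_, ?_, ?_⟩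
  · rw [Finset.lt_min'_iff]
    intro y hy
    simp only [S, Finset.mem_insert, Finset.mem_image, Finset.mem_filter] at hy
    rcases hy with rfl | ⟨p, ⟨-, hp⟩, rfl⟩
    · exact one_pos
    · exact abs_pos.mpr (sub_ne_zero.mpr fun h => hp (hx h))
  · exact Finset.min'_le _ _ (Finset.mem_insert_self _ _)
  · intro i j hij
    apply Finset.min'_le
    apply Finset.mem_insert_of_mem
    exact Finset.mem_image.mpr ⟨(i, j), by simp [hij], rfl⟩

/-- **the Wendland function `φ_{3,1}` is strictly positive definite on
`ℝ`.** For every family of pairwise distinct points `x₁, …, x_N ∈ ℝ` and every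
nonzero `c ∈ ℝ^N`, one has `∑ i ∑ j, c i * c j * b (x i − x j) > 0`, where
`b = wendland31`; in particular the kernel matrix `(b (x i − x j)) i j` is symmetric
positive definite. -/
theorem wendland31_strictly_posdef
    (N : ℕ) (x : Fin N → ℝ) (hx : Function.Injective x) :
    (∀ i j, wendland31 (x i - x j) = wendland31 (x j - x i)) ∧
    (∀ c : Fin N → ℝ, c ≠ 0 →
      0 < ∑ i, ∑ j, c i * c j * wendland31 (x i - x j)) := by
  refine ⟨fun i j => by unfold wendland31; rw [abs_sub_comm], fun c hc => ?_⟩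
  have hcont : ∀ i j, Continuous fun s => c i * c j * wker s (x i - x j) :=
    fun i j => (wker_continuous _).const_mul _
  have hcont' : ∀ i, Continuous fun s => ∑ j, c i * c j * wker s (x i - x j) :=
    fun i => continuous_finsetSum _ fun j _ => hcont i j
  have key : ∑ i, ∑ j, c i * c j * wendland31 (x i - x j)
      = ∫ s in (0:ℝ)..1, ∑ i, ∑ j, c i * c j * wker s (x i - x j) := by
    rw [intervalIntegral.integral_finsetSum]
    · refine Finset.sum_congr rfl fun i _ => ?_
      rw [intervalIntegral.integral_finsetSum]
      · refine Finset.sum_congr rfl fun j _ => ?_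
        rw [intervalIntegral.integral_const_mul, wendland_eq]
      · intro j _
        exact (hcont i j).intervalIntegrable _ _
    · intro i _
      exact (hcont' i).intervalIntegrable _ _
  rw [key]
  obtain ⟨s, hs0, hs1, hsep⟩ := exists_sep x hx
  refine intervalIntegral.integral_pos one_pos
    (continuous_finsetSum _ fun i _ => hcont' i).continuousOn
    (fun t ht => wker_form_nonneg x c ht.1) ⟨s, ⟨hs0.le, hs1⟩, ?_⟩
  have hd : ∀ i, ∑ j, c i * c j * wker s (x i - x j) = 4 * s ^ 3 * c i ^ 2 := by
    intro i
    rw [Finset.sum_eq_single i]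
    · simp only [wker, sub_self, abs_zero, max_eq_left hs0.le]
      norm_num
      ring
    · intro j _ hj
      rw [wker_zero_of_le (hsep i j hj.symm), mul_zero]
    · simp
  simp only [hd]
  obtain ⟨i, hi⟩ := Function.ne_iff.mp hc
  refine Finset.sum_pos' (fun _ _ => by positivity) ⟨i, Finset.mem_univ i, ?_⟩
  have : c i ≠ 0 := hi
  positivity
end
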